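/- Let j and m be positive integers and let α be a real number with α ≠ 0 and α ≠ −1. Then ∫_0^1 log^m(1−t) (1+αt)^{j−1} dt = (−1)^{m+1} m! ((α+1)^j/(α j)) Σ_{j ≥ j_1 ≥ ... ≥ j_m ≥ 1} ((α+1)^{−j_m} − 1)/(j_1 ··· j_m). -/

import Mathlib

/-!
Substituting `u = 1 - t` and writing `β = α + 1`, the integral becomes
`I m k = ∫₀¹ log^m u · (β - α u)^k du` with `k = j - 1`. Differentiating `u log^{m+1} u (β - α u)^k`,
which vanishes at both endpoints, and writing `α u = β - (β - α u)` gives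
`(k + 1) I (m+1) k = β k I (m+1) (k-1) - (m + 1) I m k` (`logInt_rec`).
Hence `J m k = α (k + 1) β^{-(k+1)} I m k` satisfies
`J (m+1) k - J (m+1) (k-1) = -(m + 1) J m k / (k + 1)`.
Up to the factor `(-1)^{m+1} m!`, this is the recursion obtained by summing over the largest entry
of a weakly decreasing chain (`chainSum_succ`), and for `m = 0` both sides are elementary.
-/


open scoped BigOperators

/-- Generalized harmonic number `H_n^{(k)} = Σ_{j=1}^n 1/j^k`. -/
noncomputable def genH (n k : ℕ) : ℝ := ∑ j ∈ Finset.Icc 1 n, 1 / (j : ℝ) ^ k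

/-- Unsigned Stirling numbers of the first kind. -/
def stirling1 : ℕ → ℕ → ℕ
  | 0, 0 => 1
  | 0, _ + 1 => 0
  | _ + 1, 0 => 0
  | n + 1, k + 1 => stirling1 n k + n * stirling1 n (k + 1)

/-- Complete exponential Bell polynomials (`x` indexed from 1). -/
noncomputable def bellY (x : ℕ → ℝ) : ℕ → ℝ
  | 0 => 1
  | m + 1 =>
    ∑ j ∈ (Finset.range (m + 1)).attach,
      (Nat.choose m j.1 : ℝ) * x (m + 1 - j.1) * bellY x j.1
decreasing_by
  have := Finset.mem_range.mp j.2
  omega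

/-- Bell number `Y_k(n) = Y_k(H_n, 1!H_n^{(2)}, ..., (k-1)!H_n^{(k)})`. -/
noncomputable def bellNum (k n : ℕ) : ℝ :=
  bellY (fun i => (Nat.factorial (i - 1) : ℝ) * genH n i) k

/-- Multiple harmonic-type sum `ζ*_n(k₁,...,k_r; z)`. -/
noncomputable def zstarZ (z : ℝ) : ℕ → List ℕ → ℝ
  | _, [] => 1
  | n, [k] => ∑ m ∈ Finset.Icc 1 n, z ^ m / (m : ℝ) ^ k
  | n, k :: ks => ∑ m ∈ Finset.Icc 1 n, (1 / (m : ℝ) ^ k) * zstarZ z m ks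

/-- Multiple harmonic star sum `ζ*_n(k₁,...,k_r)`. -/
noncomputable def zstar (n : ℕ) (ks : List ℕ) : ℝ := zstarZ 1 n ks

/-- Multiple harmonic sum (strict) `ζ_n(k₁,...,k_r)`. -/
noncomputable def zmhs : ℕ → List ℕ → ℝ
  | _, [] => 1
  | n, k :: ks => ∑ m ∈ Finset.Icc 1 n, (1 / (m : ℝ) ^ k) * zmhs (m - 1) ks

/-- Weakly decreasing tuples `n ≥ f 0 ≥ f 1 ≥ ... ≥ f (r-1) ≥ 1`. -/
def decT (n r : ℕ) : Finset (Fin r → ℕ) :=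
  (Fintype.piFinset fun _ => Finset.Icc 1 n).filter fun f =>
    (∀ i : Fin r, 1 ≤ f i ∧ f i ≤ n) ∧ ∀ i j : Fin r, i ≤ j → f j ≤ f i

/-- `m`-fold iterated integral of `f t_m / (t_1 ⋯ t_m)` over `z > t_1 > ⋯ > t_m > 0`. -/
noncomputable def iterInt (f : ℝ → ℝ) : ℕ → ℝ → ℝ
  | 0, z => f z
  | m + 1, z => ∫ t in (0:ℝ)..z, iterInt f m t / t

/-- `I m k = ∫₀¹ log^m u · (α + 1 - α u)^k du`. -/
noncomputable def logInt (α : ℝ) (m k : ℕ) : ℝ :=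
  ∫ u in (0:ℝ)..1, Real.log u ^ m * (α + 1 - α * u) ^ k

/-- The sum of `h (j_m) / (j_1 ⋯ j_m)` over chains `j ≥ j_1 ≥ ⋯ ≥ j_m ≥ 1`. The chain is prefixed
by `j_0 = j` before its last entry is taken, so that the value at `m = 0` is `h j`. -/
noncomputable def chainSum (h : ℕ → ℝ) (m j : ℕ) : ℝ :=
  ∑ f ∈ decT j m, h ((Fin.cons j f : Fin (m + 1) → ℕ) (Fin.last m)) / ∏ i, (f i : ℝ)

lemma mem_decT {n r : ℕ} {f : Fin r → ℕ} :
    f ∈ decT n r ↔ (∀ i, 1 ≤ f i ∧ f i ≤ n) ∧ ∀ i j : Fin r, i ≤ j → f j ≤ f i := by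
  simp only [decT, Finset.mem_filter, Fintype.mem_piFinset, Finset.mem_Icc]
  tauto

lemma cons_mem_decT {n r k : ℕ} {f : Fin r → ℕ} :
    (Fin.cons k f : Fin (r + 1) → ℕ) ∈ decT n (r + 1) ↔ (1 ≤ k ∧ k ≤ n) ∧ f ∈ decT k r := by
  simp only [mem_decT, Fin.forall_fin_succ, Fin.cons_zero, Fin.cons_succ, Fin.succ_le_succ_iff,
    Fin.zero_le, le_refl, forall_true_left, true_and]
  constructor
  · rintro ⟨⟨hk, hf⟩, h0, h1⟩
    exact ⟨hk, fun i => ⟨(hf i).1, h0 i⟩, fun i => (h1 i).2⟩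
  · rintro ⟨hk, hf, h1⟩
    refine ⟨⟨hk, fun i => ⟨(hf i).1, (hf i).2.trans hk.2⟩⟩, fun i => (hf i).2, fun i => ⟨?_, h1 i⟩⟩
    intro hi
    exact absurd hi (by simp)

lemma chainSum_zero (h : ℕ → ℝ) (j : ℕ) : chainSum h 0 j = h j := by
  have : decT j 0 = Finset.univ := by
    ext f
    simp only [mem_decT, Finset.mem_univ, iff_true]
    exact ⟨fun i => i.elim0, fun i => i.elim0⟩
  simp [chainSum, this, Fin.last]

/-- Splitting off the largest entry `k = j_1` of the chain. -/
lemma chainSum_succ (h : ℕ → ℝ) (m j : ℕ) :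
    chainSum h (m + 1) j = ∑ k ∈ Finset.Icc 1 j, chainSum h m k / k := by
  unfold chainSum
  simp only [Finset.sum_div]
  rw [Finset.sum_sigma']
  refine Finset.sum_bij' (fun f _ => ⟨f 0, Fin.tail f⟩) (fun p _ => Fin.cons p.1 p.2)
    ?_ ?_ ?_ ?_ ?_
  · intro f hf
    rw [← Fin.cons_self_tail f, cons_mem_decT] at hf
    simpa only [Finset.mem_sigma, Finset.mem_Icc] using hf
  · intro p hp
    rw [cons_mem_decT]
    simpa only [Finset.mem_sigma, Finset.mem_Icc] using hp
  · intro f _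
    exact Fin.cons_self_tail f
  · rintro ⟨k, f⟩ _
    simp
  · intro f _
    rw [Fin.prod_univ_succ, ← Fin.succ_last, Fin.cons_succ, Fin.cons_self_tail, div_div]
    congr 1
    exact mul_comm _ _

lemma chainSum_succ_zero (h : ℕ → ℝ) (m : ℕ) : chainSum h (m + 1) 0 = 0 := by
  simp [chainSum_succ]

lemma chainSum_succ_succ (h : ℕ → ℝ) (m j : ℕ) :
    chainSum h (m + 1) (j + 1) = chainSum h (m + 1) j + chainSum h m (j + 1) / (j + 1 : ℝ) := by
  rw [chainSum_succ, chainSum_succ, Finset.sum_Icc_succ_top (by omega)]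
  push_cast
  rfl

/-- Near `0`, `|log u|^n` is dominated by a multiple of `u^{-s}` with `s < 1`. -/
lemma intervalIntegrable_log_pow (n : ℕ) :
    IntervalIntegrable (fun u : ℝ => Real.log u ^ n) MeasureTheory.volume 0 1 := by
  set t : ℝ := 1 / (n + 1) with ht
  have htpos : 0 < t := by positivity
  have htn : -1 < -(t * n) := by
    have : t * n < 1 := by
      rw [ht, one_div, inv_mul_lt_iff₀ (by positivity)]
      linarith
    linarith
  have hint : IntervalIntegrable (fun u : ℝ => (1 / t) ^ n * u ^ (-(t * n)))
      MeasureTheory.volume 0 1 :=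
    (intervalIntegral.intervalIntegrable_rpow' htn).const_mul _
  refine hint.mono_fun' (Real.measurable_log.pow_const n).aestronglyMeasurable ?_
  rw [Set.uIoc_of_le zero_le_one]
  filter_upwards [MeasureTheory.ae_restrict_mem measurableSet_Ioc] with u hu
  have hb := Real.abs_log_mul_self_rpow_lt u t hu.1 hu.2 htpos
  have hut : 0 < u ^ t := Real.rpow_pos_of_pos hu.1 t
  have hn : (u ^ t) ^ n = u ^ (t * n) := by
    rw [Real.rpow_mul hu.1.le, Real.rpow_natCast]
  rw [Real.norm_eq_abs, abs_pow, Real.rpow_neg hu.1.le, ← div_eq_mul_inv,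
    le_div_iff₀ (Real.rpow_pos_of_pos hu.1 _), ← hn, ← mul_pow]
  refine pow_le_pow_left₀ (by positivity) ?_ n
  rw [abs_mul, abs_of_pos hut] at hb
  exact hb.le

lemma intervalIntegrable_logInt (α : ℝ) (m k : ℕ) :
    IntervalIntegrable (fun u : ℝ => Real.log u ^ m * (α + 1 - α * u) ^ k)
      MeasureTheory.volume 0 1 :=
  (intervalIntegrable_log_pow m).mul_continuousOn (by fun_prop)

lemma tendsto_mul_log_pow (n : ℕ) :
    Filter.Tendsto (fun u : ℝ => u * Real.log u ^ (n + 1)) (nhdsWithin 0 (Set.Ioi 0)) (nhds 0) := by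
  have hpos : (0 : ℝ) < 1 / (n + 1) := by positivity
  have h := (tendsto_log_mul_rpow_nhdsGT_zero hpos).pow (n + 1)
  rw [zero_pow n.succ_ne_zero] at h
  refine h.congr' ?_
  filter_upwards [self_mem_nhdsWithin] with u hu
  have hu' : (0 : ℝ) < u := hu
  have : (u ^ ((1 : ℝ) / (n + 1))) ^ (n + 1) = u := by
    rw [← Real.rpow_natCast, ← Real.rpow_mul hu'.le]
    push_cast
    rw [one_div_mul_cancel (by positivity), Real.rpow_one]
  rw [mul_pow, this, mul_comm]

/-- Integration by parts: the boundary values of `u log^{m+1} u (α + 1 - α u)^k` vanish.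
For `k = 0` the junk index `k - 1` is harmless, since its coefficient is `0`. -/
lemma logInt_rec (α : ℝ) (m k : ℕ) :
    (k + 1) * logInt α (m + 1) k =
      (α + 1) * k * logInt α (m + 1) (k - 1) - (m + 1) * logInt α m k := by
  have hi1 := intervalIntegrable_logInt α (m + 1) k
  have hi2 := intervalIntegrable_logInt α (m + 1) (k - 1)
  have hi3 := intervalIntegrable_logInt α m k
  have hderiv : ∀ u ∈ Set.Ioo (0:ℝ) 1,
      HasDerivAt (fun u : ℝ => u * Real.log u ^ (m + 1) * (α + 1 - α * u) ^ k)
        ((k + 1) * (Real.log u ^ (m + 1) * (α + 1 - α * u) ^ k)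
          - (α + 1) * k * (Real.log u ^ (m + 1) * (α + 1 - α * u) ^ (k - 1))
          + (m + 1) * (Real.log u ^ m * (α + 1 - α * u) ^ k)) u := by
    intro u hu
    have hu0 : u ≠ 0 := hu.1.ne'
    have hp : HasDerivAt (fun u : ℝ => α + 1 - α * u) (-α) u := by
      simpa using ((hasDerivAt_id u).const_mul α).const_sub (α + 1)
    have h := ((hasDerivAt_id u).mul ((Real.hasDerivAt_log hu0).pow (m + 1))).mul (hp.pow k)
    refine h.congr_deriv ?_
    rcases k with _ | k
    · simp
      field_simp
    · simp only [id, Nat.add_sub_cancel, Pi.mul_apply, Pi.pow_apply]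
      push_cast
      field_simp
      ring
  have h0 : Filter.Tendsto (fun u : ℝ => u * Real.log u ^ (m + 1) * (α + 1 - α * u) ^ k)
      (nhdsWithin 0 (Set.Ioi 0)) (nhds 0) := by
    have hc : Filter.Tendsto (fun u : ℝ => (α + 1 - α * u) ^ k)
        (nhdsWithin 0 (Set.Ioi 0)) (nhds ((α + 1 - α * 0) ^ k)) :=
      (Continuous.tendsto (by fun_prop) 0).mono_left nhdsWithin_le_nhds
    simpa using (tendsto_mul_log_pow m).mul hc
  have h1 : Filter.Tendsto (fun u : ℝ => u * Real.log u ^ (m + 1) * (α + 1 - α * u) ^ k)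
      (nhdsWithin 1 (Set.Iio 1)) (nhds 0) := by
    have hc : ContinuousAt (fun u : ℝ => u * Real.log u ^ (m + 1) * (α + 1 - α * u) ^ k) 1 := by
      have := Real.continuousAt_log (one_ne_zero)
      fun_prop
    have := hc.tendsto.mono_left (nhdsWithin_le_nhds (s := Set.Iio 1))
    simpa using this
  have hftc := intervalIntegral.integral_eq_sub_of_hasDerivAt_of_tendsto zero_lt_one hderiv
    (((hi1.const_mul _).sub (hi2.const_mul _)).add (hi3.const_mul _)) h0 h1
  rw [intervalIntegral.integral_add ((hi1.const_mul _).sub (hi2.const_mul _)) (hi3.const_mul _),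
    intervalIntegral.integral_sub (hi1.const_mul _) (hi2.const_mul _)] at hftc
  simp only [intervalIntegral.integral_const_mul] at hftc
  simp only [logInt]
  linarith

lemma logInt_zero (α : ℝ) (k : ℕ) : α * (k + 1) * logInt α 0 k = (α + 1) ^ (k + 1) - 1 := by
  have hderiv : ∀ u ∈ Set.uIcc (0:ℝ) 1, HasDerivAt (fun u : ℝ => -(α + 1 - α * u) ^ (k + 1))
      (α * (k + 1) * (Real.log u ^ 0 * (α + 1 - α * u) ^ k)) u := by
    intro u _
    have hp : HasDerivAt (fun u : ℝ => α + 1 - α * u) (-α) u := by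
      simpa using ((hasDerivAt_id u).const_mul α).const_sub (α + 1)
    refine (hp.pow (k + 1)).neg.congr_deriv ?_
    simp
    ring
  have h := intervalIntegral.integral_eq_sub_of_hasDerivAt hderiv
    ((intervalIntegrable_logInt α 0 k).const_mul _)
  rw [intervalIntegral.integral_const_mul] at h
  rw [logInt, h]
  simp
  ring

/-- The closed form, cleared of denominators; it also holds for `m = 0`. -/
lemma logInt_eq (α : ℝ) (hα1 : α ≠ -1) (m k : ℕ) :
    α * (k + 1) * logInt α m k = (-1 : ℝ) ^ (m + 1) * (Nat.factorial m : ℝ) * (α + 1) ^ (k + 1) *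
      chainSum (fun n => ((α + 1) ^ n)⁻¹ - 1) m (k + 1) := by
  induction m generalizing k with
  | zero =>
    have hβ : α + 1 ≠ 0 := fun h => hα1 (by linarith)
    rw [logInt_zero, chainSum_zero]
    field_simp
    simp
  | succ m ihm =>
    have hm : ∀ k : ℕ, α * logInt α m k = (-1 : ℝ) ^ (m + 1) * (Nat.factorial m : ℝ) *
        (α + 1) ^ (k + 1) *
        (chainSum (fun n => ((α + 1) ^ n)⁻¹ - 1) m (k + 1) / (k + 1 : ℝ)) := by
      intro k
      have hk : (k + 1 : ℝ) ≠ 0 := by positivity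
      rw [← mul_div_assoc, eq_div_iff hk, ← ihm]
      ring
    induction k with
    | zero =>
      have hr := logInt_rec α m 0
      have hm0 := hm 0
      rw [chainSum_succ_succ, chainSum_succ_zero, Nat.factorial_succ]
      push_cast at *
      linear_combination α * hr - (m + 1) * hm0
    | succ k ihk =>
      have hr := logInt_rec α m (k + 1)
      have hm1 := hm (k + 1)
      rw [chainSum_succ_succ, Nat.factorial_succ]
      rw [Nat.factorial_succ] at ihk
      rw [Nat.add_sub_cancel] at hr
      push_cast at *
      linear_combination α * hr - (m + 1) * hm1 + (α + 1) * ihk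

/-- Proposition 3.5: `∫_0^1 log^m(1-t)(1+αt)^{j-1} dt`. -/
theorem integral_log_pow_mul_pow (j m : ℕ) (hj : 0 < j) (hm : 0 < m)
    (α : ℝ) (hα : α ≠ 0) (hα1 : α ≠ -1) :
    ∫ t in (0:ℝ)..1, (Real.log (1 - t)) ^ m * (1 + α * t) ^ (j - 1) =
      (-1 : ℝ) ^ (m + 1) * (Nat.factorial m : ℝ) * ((α + 1) ^ j / (α * j)) *
        ∑ f ∈ decT j m,
          (((α + 1) ^ (f ⟨m - 1, by omega⟩))⁻¹ - 1) / ∏ i, (f i : ℝ) := by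
  obtain ⟨k, rfl⟩ : ∃ k, j = k + 1 := ⟨j - 1, by omega⟩
  obtain ⟨n, rfl⟩ : ∃ n, m = n + 1 := ⟨m - 1, by omega⟩
  have hsum : ∑ f ∈ decT (k + 1) (n + 1),
      (((α + 1) ^ (f ⟨n + 1 - 1, by omega⟩))⁻¹ - 1) / ∏ i, (f i : ℝ) =
      chainSum (fun n => ((α + 1) ^ n)⁻¹ - 1) (n + 1) (k + 1) := by
    refine Finset.sum_congr rfl fun f _ => ?_
    rw [← Fin.succ_last, Fin.cons_succ]
    rfl
  have hint : ∫ t in (0:ℝ)..1, (Real.log (1 - t)) ^ (n + 1) * (1 + α * t) ^ (k + 1 - 1) =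
      logInt α (n + 1) k := by
    have h := intervalIntegral.integral_comp_sub_left (a := 0) (b := 1)
      (fun u : ℝ => Real.log u ^ (n + 1) * (α + 1 - α * u) ^ k) 1
    rw [sub_self, sub_zero] at h
    rw [logInt, ← h]
    refine intervalIntegral.integral_congr fun t _ => ?_
    simp only [Nat.add_sub_cancel]
    congr 2
    ring
  have hk : (k + 1 : ℝ) ≠ 0 := by positivity
  rw [hsum, hint]
  have h := logInt_eq α hα1 (n + 1) k
  generalize chainSum (fun n => ((α + 1) ^ n)⁻¹ - 1) (n + 1) (k + 1) = S at h ⊢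
  push_cast
  field_simp
  linear_combination h
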